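/- Let U ⊆ ℝⁿ be open with coordinates x = (x¹,…,xⁿ), let g₁,…,gₙ, K₁,…,Kₙ : U → ℝ be smooth with Kᵢ(x) ≠ Kⱼ(x) for all i ≠ j and all x ∈ U, and let ε₁,…,εₙ ∈ {−1,1}. Define H(x,p) = (1/2)·Σᵢ εᵢ·exp(gᵢ(x))·pᵢ² and F(x,p) = Σᵢ εᵢ·exp(gᵢ(x))·Kᵢ(x)·pᵢ². If {H,F}(x,p) = 0 for all (x,p) ∈ U × ℝⁿ, then for all i ≠ j and all x ∈ U: (∂gᵢ/∂xʲ)(x) = (Kⱼ(x) − Kᵢ(x))⁻¹ · (∂Kᵢ/∂xʲ)(x). -/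

import Mathlib

open scoped BigOperators

/-- Partial derivative of `f : ℝⁿ → ℝ` in the `j`-th coordinate direction. -/
noncomputable def pd {n : ℕ} (f : (Fin n → ℝ) → ℝ) (j : Fin n) (x : Fin n → ℝ) : ℝ :=
  fderiv ℝ f x (Pi.single j 1)

/-- The canonical Poisson bracket of two functions on `ℝⁿ × ℝⁿ` (positions `x`, momenta `p`):
`{H,F} = Σ_s (∂H/∂p_s · ∂F/∂x^s − ∂H/∂x^s · ∂F/∂p_s)`. -/
noncomputable def poisson {n : ℕ} (H F : ((Fin n → ℝ) × (Fin n → ℝ)) → ℝ)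
    (q : (Fin n → ℝ) × (Fin n → ℝ)) : ℝ :=
  ∑ s : Fin n,
    (fderiv ℝ H q ((0 : Fin n → ℝ), Pi.single s 1) * fderiv ℝ F q (Pi.single s 1, (0 : Fin n → ℝ))
      - fderiv ℝ H q (Pi.single s 1, (0 : Fin n → ℝ)) *
          fderiv ℝ F q ((0 : Fin n → ℝ), Pi.single s 1))

/-!
For diagonal quadratic Hamiltonians `∑ aᵢ pᵢ²` and `∑ bᵢ pᵢ²`, the bracket at a fixed `x` is the
cubic form `2 ∑ₛᵢ (aₛ ∂ₛbᵢ - bₛ ∂ₛaᵢ) pₛ pᵢ²` in the momenta. The monomials `pₛ pᵢ²` are pairwise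
distinct, so every coefficient vanishes. For `bᵢ = aᵢ Kᵢ` and `aᵢ = εᵢ exp gᵢ` the coefficient is
`aₛ aᵢ (∂ₛKᵢ - (Kₛ - Kᵢ) ∂ₛgᵢ)`.
-/

open Matrix in
theorem forall_dotProduct_mulVec_sq_eq_zero_iff {ι R : Type*} [Fintype ι] [Ring R]
    [NoZeroDivisors R] [NeZero (2 : R)] {C : Matrix ι ι R} :
    (∀ p : ι → R, p ⬝ᵥ C *ᵥ (p ^ 2) = 0) ↔ C = 0 := by
  classical
  refine ⟨fun h => ?_, fun h p => by rw [h, zero_mulVec, dotProduct_zero]⟩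
  have diag (i : ι) : C i i = 0 := by
    simpa [pow_two, ← Pi.single_mul] using h (Pi.single i 1)
  ext j i
  obtain rfl | hij := eq_or_ne i j
  · exact diag i
  have sq_sum : (Pi.single i 1 + Pi.single j 1 : ι → R) ^ 2 = Pi.single i 1 + Pi.single j 1 := by
    ext k
    by_cases hi : k = i <;> by_cases hj : k = j <;> simp_all
  have sq_diff : (Pi.single i 1 - Pi.single j 1 : ι → R) ^ 2 = Pi.single i 1 + Pi.single j 1 := by
    ext k
    by_cases hi : k = i <;> by_cases hj : k = j <;> simp_all
  have sum_eq : C j i + C i j = 0 := by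
    have := h (Pi.single i 1 + Pi.single j 1)
    rw [sq_sum] at this
    simpa [mulVec_add, add_dotProduct, diag] using this
  have entry_eq : C j i = C i j := by
    have := h (Pi.single i 1 - Pi.single j 1)
    rw [sq_diff] at this
    simpa [mulVec_add, sub_dotProduct, diag, neg_add_eq_zero] using this
  have two_mul_eq : 2 * C j i = 0 := by
    rwa [← entry_eq, ← two_mul] at sum_eq
  exact (mul_eq_zero.mp two_mul_eq).resolve_left two_ne_zero

/-- The Hamiltonian `∑ aᵢ(x) pᵢ²` of the diagonal (inverse) metric with entries `aᵢ`. The factor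
`1 / 2` of the kinetic energy is not included. -/
def diagQuad {ι E : Type*} [Fintype ι] (a : ι → E → ℝ) (q : E × (ι → ℝ)) : ℝ :=
  ∑ i, a i q.1 * q.2 i ^ 2

section fderiv

variable {ι E : Type*} [Fintype ι] [NormedAddCommGroup E] [NormedSpace ℝ E]
  {a : ι → E → ℝ} {x : E}

theorem fderiv_diagQuad_apply (ha : ∀ i, DifferentiableAt ℝ (a i) x) (p : ι → ℝ) (v : E)
    (w : ι → ℝ) :
    fderiv ℝ (diagQuad a) (x, p) (v, w) =
      ∑ i, (fderiv ℝ (a i) x v * p i ^ 2 + 2 * a i x * p i * w i) := by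
  have hcoeff (i : ι) : HasFDerivAt (fun q : E × (ι → ℝ) => a i q.1)
      (fderiv ℝ (a i) x ∘L .fst ℝ E (ι → ℝ)) (x, p) :=
    (ha i).hasFDerivAt.comp (x, p) hasFDerivAt_fst
  have hmom (i : ι) : HasFDerivAt (fun q : E × (ι → ℝ) => q.2 i)
      (.proj i ∘L .snd ℝ E (ι → ℝ)) (x, p) :=
    (ContinuousLinearMap.proj i ∘L .snd ℝ E (ι → ℝ)).hasFDerivAt
  have hsum := HasFDerivAt.fun_sum (u := Finset.univ)
    fun i _ => (hcoeff i).fun_mul ((hmom i).pow 2)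
  rw [show diagQuad a = fun q => ∑ i, a i q.1 * q.2 i ^ 2 from rfl, hsum.fderiv, sum_apply]
  refine Finset.sum_congr rfl fun i _ => ?_
  simp only [Nat.add_one_sub_one, pow_one, nsmul_eq_mul, Nat.cast_ofNat, add_apply, smul_apply,
    ContinuousLinearMap.comp_apply, ContinuousLinearMap.coe_snd', ContinuousLinearMap.proj_apply,
    smul_eq_mul, ContinuousLinearMap.coe_fst']
  ring

theorem fderiv_diagQuad_position (ha : ∀ i, DifferentiableAt ℝ (a i) x) (p : ι → ℝ) (v : E) :
    fderiv ℝ (diagQuad a) (x, p) (v, 0) = ∑ i, fderiv ℝ (a i) x v * p i ^ 2 := by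
  simp [fderiv_diagQuad_apply ha]

theorem fderiv_diagQuad_momentum [DecidableEq ι] (ha : ∀ i, DifferentiableAt ℝ (a i) x)
    (p : ι → ℝ) (s : ι) :
    fderiv ℝ (diagQuad a) (x, p) (0, Pi.single s 1) = 2 * a s x * p s := by
  simp [fderiv_diagQuad_apply ha, Pi.single_apply]

end fderiv

section bracket

variable {n : ℕ} {x : Fin n → ℝ}

theorem pd_mul {f h : (Fin n → ℝ) → ℝ} (hf : DifferentiableAt ℝ f x)
    (hh : DifferentiableAt ℝ h x) (j : Fin n) :
    pd (fun y => f y * h y) j x = f x * pd h j x + h x * pd f j x := by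
  simp [pd, fderiv_fun_mul hf hh]

theorem pd_const_mul_exp {f : (Fin n → ℝ) → ℝ} (hf : DifferentiableAt ℝ f x) (c : ℝ)
    (j : Fin n) :
    pd (fun y => c * Real.exp (f y)) j x = c * Real.exp (f x) * pd f j x := by
  simp [pd, fderiv_const_mul hf.exp, fderiv_exp hf, mul_assoc]

theorem poisson_const_mul_left (c : ℝ) (H F : (Fin n → ℝ) × (Fin n → ℝ) → ℝ)
    (q : (Fin n → ℝ) × (Fin n → ℝ)) :
    poisson (fun q => c * H q) F q = c * poisson H F q := by
  have hfderiv : fderiv ℝ (fun q => c * H q) q = c • fderiv ℝ H q :=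
    congrFun (fderiv_const_smul_field c) q
  simp only [poisson, hfderiv, smul_apply, smul_eq_mul, Finset.mul_sum]
  exact Finset.sum_congr rfl fun s _ => by ring

variable {a b K : Fin n → (Fin n → ℝ) → ℝ}

open Matrix in
theorem poisson_diagQuad (ha : ∀ i, DifferentiableAt ℝ (a i) x)
    (hb : ∀ i, DifferentiableAt ℝ (b i) x) (p : Fin n → ℝ) :
    poisson (diagQuad a) (diagQuad b) (x, p) =
      2 * (p ⬝ᵥ of (fun s i => a s x * pd (b i) s x - b s x * pd (a i) s x) *ᵥ (p ^ 2)) := by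
  simp only [poisson, fderiv_diagQuad_position, fderiv_diagQuad_momentum, ha, hb,
    implies_true, dotProduct, mulVec, of_apply, Pi.pow_apply, Finset.mul_sum, Finset.sum_mul,
    ← Finset.sum_sub_distrib, pd]
  exact Finset.sum_congr rfl fun s _ => Finset.sum_congr rfl fun i _ => by ring

theorem forall_poisson_diagQuad_eq_zero_iff (ha : ∀ i, DifferentiableAt ℝ (a i) x)
    (hb : ∀ i, DifferentiableAt ℝ (b i) x) :
    (∀ p, poisson (diagQuad a) (diagQuad b) (x, p) = 0) ↔
      ∀ i j, a j x * pd (b i) j x = b j x * pd (a i) j x := by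
  simp only [poisson_diagQuad ha hb, mul_eq_zero, two_ne_zero, false_or,
    forall_dotProduct_mulVec_sq_eq_zero_iff, ← Matrix.ext_iff, Matrix.of_apply,
    Matrix.zero_apply, sub_eq_zero]
  exact forall_comm

theorem forall_poisson_diagQuad_mul_eq_zero_iff (ha : ∀ i, DifferentiableAt ℝ (a i) x)
    (hK : ∀ i, DifferentiableAt ℝ (K i) x) (ha₀ : ∀ i, a i x ≠ 0) :
    (∀ p, poisson (diagQuad a) (diagQuad fun i y => a i y * K i y) (x, p) = 0) ↔
      ∀ i j, (K j x - K i x) * pd (a i) j x = a i x * pd (K i) j x := by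
  rw [forall_poisson_diagQuad_eq_zero_iff ha fun i => (ha i).fun_mul (hK i)]
  refine forall₂_congr fun i j => ?_
  rw [pd_mul (ha i) (hK i), mul_assoc, mul_right_inj' (ha₀ j), ← eq_sub_iff_add_eq, ← sub_mul,
    eq_comm]

theorem metric_equation_of_poisson_commute_general {g : Fin n → (Fin n → ℝ) → ℝ}
    (hg : ∀ i, DifferentiableAt ℝ (g i) x) (hK : ∀ i, DifferentiableAt ℝ (K i) x)
    {ε : Fin n → ℝ} (hε : ∀ i, ε i ≠ 0) :
    (∀ p : Fin n → ℝ,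
      poisson
        (fun q => (1 / 2 : ℝ) * ∑ i, ε i * Real.exp (g i q.1) * (q.2 i) ^ 2)
        (fun q => ∑ i, ε i * Real.exp (g i q.1) * K i q.1 * (q.2 i) ^ 2) (x, p) = 0) ↔
      ∀ i j, (K j x - K i x) * pd (g i) j x = pd (K i) j x := by
  let a (i : Fin n) (y : Fin n → ℝ) : ℝ := ε i * Real.exp (g i y)
  have ha (i : Fin n) : DifferentiableAt ℝ (a i) x := (hg i).exp.const_mul (ε i)
  have ha₀ (i : Fin n) : a i x ≠ 0 := mul_ne_zero (hε i) (Real.exp_ne_zero _)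
  have hpd (i j : Fin n) : pd (a i) j x = a i x * pd (g i) j x := pd_const_mul_exp (hg i) (ε i) j
  calc
    _ ↔ ∀ p, poisson (diagQuad a) (diagQuad fun i y => a i y * K i y) (x, p) = 0 :=
      forall_congr' fun p => by
        rw [poisson_const_mul_left, mul_eq_zero_iff_left one_half_pos.ne']
        rfl
    _ ↔ ∀ i j, (K j x - K i x) * pd (a i) j x = a i x * pd (K i) j x :=
      forall_poisson_diagQuad_mul_eq_zero_iff ha hK ha₀
    _ ↔ ∀ i j, (K j x - K i x) * pd (g i) j x = pd (K i) j x :=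
      forall₂_congr fun i j => by rw [hpd, mul_left_comm, mul_right_inj' (ha₀ i)]

end bracket

theorem metric_equation_of_poisson_commute {n : ℕ} (U : Set (Fin n → ℝ)) (hU : IsOpen U)
    (g K : Fin n → (Fin n → ℝ) → ℝ)
    (hg : ∀ i, ContDiffOn ℝ (⊤ : ℕ∞) (g i) U) (hK : ∀ i, ContDiffOn ℝ (⊤ : ℕ∞) (K i) U)
    (hdist : ∀ i j : Fin n, i ≠ j → ∀ x ∈ U, K i x ≠ K j x)
    (ε : Fin n → ℝ) (hε : ∀ i, ε i = 1 ∨ ε i = -1)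
    (hbracket : ∀ x ∈ U, ∀ p : Fin n → ℝ,
      poisson
        (fun q => (1 / 2 : ℝ) * ∑ i, ε i * Real.exp (g i q.1) * (q.2 i) ^ 2)
        (fun q => ∑ i, ε i * Real.exp (g i q.1) * K i q.1 * (q.2 i) ^ 2) (x, p) = 0) :
    ∀ i j : Fin n, i ≠ j → ∀ x ∈ U,
      pd (g i) j x = (K j x - K i x)⁻¹ * pd (K i) j x := by
  intro i j hij x hx
  have differentiableAt {f : (Fin n → ℝ) → ℝ} (hf : ContDiffOn ℝ (⊤ : ℕ∞) f U) :
      DifferentiableAt ℝ f x :=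
    (hf.contDiffAt (hU.mem_nhds hx)).differentiableAt (by simp)
  have hε₀ (k : Fin n) : ε k ≠ 0 := by
    rcases hε k with h | h <;> simp [h]
  have metric_eq := (metric_equation_of_poisson_commute_general
    (fun k => differentiableAt (hg k)) (fun k => differentiableAt (hK k)) hε₀).mp
    (hbracket x hx) i j
  rwa [eq_inv_mul_iff_mul_eq₀ (sub_ne_zero.mpr (hdist j i hij.symm x hx))]
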